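/- arXiv:1408.2243 — 6 statements merged into one kernel-verified Lean document; each statement's English description precedes it below -/
import Mathlib

section
/- For every x in the open interval (0, π/2), the function p ↦ (1/(3p²))·cos(px) + 1 − 1/(3p²) (with value 1 − x²/6 at p = 0) is increasing in p on the interval [0, 1]. In particular, for any 0 ≤ p < q ≤ 1 and any x ∈ (0, π/2), one has (1/(3p²))·cos(px) + 1 − 1/(3p²) < (1/(3q²))·cos(qx) + 1 − 1/(3q²) (interpreting the p = 0 case as 1 − x²/6). -/
open Real

/-! By the half-angle formula the function equals `1 - x ^ 2 / 6 * sinc (p * x / 2) ^ 2`, with no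
exception at `p = 0`, and `sinc` is nonnegative and strictly decreasing on `[0, π]` because `sin` is
strictly concave there. -/

theorem strictAntiOn_sinc : StrictAntiOn sinc (Set.Icc 0 π) := by
  intro a ha b hb hab
  have b_pos : 0 < b := ha.1.trans_lt hab
  rw [sinc_of_ne_zero b_pos.ne']
  rcases ha.1.eq_or_lt with rfl | a_pos
  · rw [sinc_zero, div_lt_one b_pos]
    exact sin_lt b_pos
  · rw [sinc_of_ne_zero a_pos.ne']
    simpa using strictConcaveOn_sin_Icc.secant_strict_mono (Set.left_mem_Icc.2 pi_pos.le) ha hb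
      a_pos.ne' b_pos.ne' hab

theorem sinc_nonneg_of_mem_Icc {y : ℝ} (hy : y ∈ Set.Icc 0 π) : 0 ≤ sinc y := by
  rcases eq_or_ne y 0 with rfl | hy0
  · simp
  · rw [sinc_of_ne_zero hy0]
    exact div_nonneg (sin_nonneg_of_mem_Icc hy) hy.1

theorem sinc_abs (y : ℝ) : sinc |y| = sinc y := by
  rcases abs_choice y with h | h <;> simp [h]

theorem cos_eq_one_sub_mul_sinc_sq (y : ℝ) : cos y = 1 - y ^ 2 / 2 * sinc (y / 2) ^ 2 := by
  rcases eq_or_ne y 0 with rfl | hy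
  · simp
  · rw [sinc_of_ne_zero (div_ne_zero hy two_ne_zero), div_pow, sin_sq_eq_half_sub,
      mul_div_cancel₀ y two_ne_zero]
    field_simp
    ring

theorem ite_cos_eq_one_sub_mul_sinc_sq (x p : ℝ) :
    (if p = 0 then 1 - x ^ 2 / 6 else 1 / (3 * p ^ 2) * cos (p * x) + 1 - 1 / (3 * p ^ 2)) =
      1 - x ^ 2 / 6 * sinc (p * x / 2) ^ 2 := by
  split_ifs with hp
  · simp [hp]
  · rw [cos_eq_one_sub_mul_sinc_sq]
    field_simp
    ring

theorem strictAntiOn_sinc_mul_half_sq {x : ℝ} (hx : x ≠ 0) :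
    StrictAntiOn (fun p : ℝ => sinc (p * x / 2) ^ 2) (Set.Icc 0 (2 * π / |x|)) := by
  have x_pos : 0 < |x| := abs_pos.2 hx
  have sinc_eq {p : ℝ} (hp : 0 ≤ p) : sinc (p * x / 2) = sinc (p * |x| / 2) := by
    rw [← sinc_abs, abs_div, abs_mul, abs_of_nonneg hp, abs_two]
  have half_mem {p : ℝ} (hp : p ∈ Set.Icc 0 (2 * π / |x|)) : p * |x| / 2 ∈ Set.Icc 0 π := by
    have := (le_div_iff₀ x_pos).1 hp.2
    exact ⟨by have := hp.1; positivity, by linarith⟩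
  intro p hp q hq hpq
  have half_lt : p * |x| / 2 < q * |x| / 2 := by gcongr
  simp only [sinc_eq hp.1, sinc_eq hq.1]
  exact pow_lt_pow_left₀ (strictAntiOn_sinc (half_mem hp) (half_mem hq) half_lt)
    (sinc_nonneg_of_mem_Icc (half_mem hq)) two_ne_zero

theorem stmt_0_general {x : ℝ} (hx : x ≠ 0) :
    StrictMonoOn
      (fun p : ℝ =>
        if p = 0 then 1 - x ^ 2 / 6
        else 1 / (3 * p ^ 2) * cos (p * x) + 1 - 1 / (3 * p ^ 2))
      (Set.Icc 0 (2 * π / |x|)) := by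
  intro p hp q hq hpq
  have sinc_sq_lt := strictAntiOn_sinc_mul_half_sq hx hp hq hpq
  simp only [ite_cos_eq_one_sub_mul_sinc_sq]
  gcongr

/-- For each fixed `x ∈ (0, π/2)`, the function
`p ↦ (1/(3p²))·cos(px) + 1 − 1/(3p²)` (with value `1 − x²/6` at `p = 0`)
is (strictly) increasing on `[0, 1]`. -/
theorem stmt_0 (x : ℝ) (hx : x ∈ Set.Ioo 0 (π / 2)) :
    StrictMonoOn
      (fun p : ℝ =>
        if p = 0 then 1 - x ^ 2 / 6
        else 1 / (3 * p ^ 2) * Real.cos (p * x) + 1 - 1 / (3 * p ^ 2))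
      (Set.Icc (0 : ℝ) 1) := by
  have one_le : 1 ≤ 2 * π / |x| := by
    rw [abs_of_pos hx.1, one_le_div hx.1]
    linarith [hx.2, pi_pos]
  exact (stmt_0_general hx.1.ne').mono (Set.Icc_subset_Icc_right one_le)
end

section
/- Let c ∈ (0, 3/5] and for each natural number n ≥ 1 define a_n(c) = 3 − (2n+1)·c^(n−1). Then for every n ≥ 3 one has 1 < a_{n+1}(c)/a_n(c) ≤ a_{n+1}(3/5)/a_n(3/5) ≤ 11/5. -/
/-!
Write `f = a_{m+2} / a_{m+1}`. The sign of `f'` at `x > 0` is that of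
`3m(2m+3) - 3(m+1)(2m+5)x + (2m+3)(2m+5)x^(m+1)`. On `[0, 3/5]` the linear part alone is
nonnegative once `m ≥ 3`; for `m = 2` the power is needed as well. So `f` is monotone there.
At `3/5`, the bound `f ≤ 11/5` amounts to `(3/5)^m (16m+18) ≤ 18`, which holds by induction and
also makes the denominators positive.
-/

/-- The number `a_{m+1}(x)`, indexed by the exponent `m` of `x` so that no truncated subtraction
occurs. -/
def aSucc (m : ℕ) (x : ℝ) : ℝ := 3 - (2 * m + 3) * x ^ m

theorem hasDerivAt_aSucc (m : ℕ) (x : ℝ) :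
    HasDerivAt (aSucc m) (-((2 * m + 3) * (m * x ^ (m - 1)))) x :=
  ((hasDerivAt_pow m x).const_mul _).const_sub 3

theorem antitoneOn_aSucc (m : ℕ) : AntitoneOn (aSucc m) (Set.Ici 0) := by
  intro x hx y _ hxy
  have hpow : x ^ m ≤ y ^ m := pow_le_pow_left₀ hx hxy m
  unfold aSucc
  gcongr

theorem aSucc_lt_aSucc_succ {m : ℕ} {x : ℝ} (hx : 0 < x) (hmx : (2 * m + 5) * x < 2 * m + 3) :
    aSucc m x < aSucc (m + 1) x := by
  have hstep : aSucc (m + 1) x - aSucc m x = x ^ m * (2 * m + 3 - (2 * m + 5) * x) := by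
    simp only [aSucc]
    push_cast
    ring
  have hpos : 0 < x ^ m * (2 * m + 3 - (2 * m + 5) * x) :=
    mul_pos (pow_pos hx m) (sub_pos.mpr hmx)
  linarith

theorem three_fifths_pow_mul_le {m : ℕ} (hm : 2 ≤ m) : (3 / 5 : ℝ) ^ m * (16 * m + 18) ≤ 18 := by
  induction m, hm using Nat.le_induction with
  | base => norm_num
  | succ m hm ih =>
    calc (3 / 5 : ℝ) ^ (m + 1) * (16 * ↑(m + 1) + 18)
        = (3 / 5) ^ m * (3 / 5 * (16 * m + 34)) := by push_cast; ring
      _ ≤ (3 / 5) ^ m * (16 * m + 18) := by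
        gcongr
        have : (2 : ℝ) ≤ m := by exact_mod_cast hm
        linarith
      _ ≤ 18 := ih

theorem aSucc_pos {m : ℕ} (hm : 2 ≤ m) {x : ℝ} (hx : x ∈ Set.Icc 0 (3 / 5)) : 0 < aSucc m x := by
  have hpos : 0 < (3 / 5 : ℝ) ^ m * m := by positivity
  have hend : 0 < aSucc m (3 / 5) := by
    unfold aSucc
    linarith [three_fifths_pow_mul_le hm]
  exact hend.trans_le (antitoneOn_aSucc m hx.1 (by norm_num : (0 : ℝ) ≤ 3 / 5) hx.2)

theorem aSucc_succ_div_aSucc_three_fifths_le {m : ℕ} (hm : 2 ≤ m) :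
    aSucc (m + 1) (3 / 5) / aSucc m (3 / 5) ≤ 11 / 5 := by
  rw [div_le_iff₀ (aSucc_pos hm (by norm_num))]
  simp only [aSucc, pow_succ]
  push_cast
  linarith [three_fifths_pow_mul_le hm]

/-- The factor of the derivative of `a_{m+2} / a_{m+1}` at `x > 0` that determines its sign: the
numerator given by the quotient rule, divided by `x ^ (m - 1)`. -/
def ratioDerivFactor (m : ℕ) (x : ℝ) : ℝ :=
  3 * m * (2 * m + 3) - 3 * (m + 1) * (2 * m + 5) * x + (2 * m + 3) * (2 * m + 5) * x ^ (m + 1)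

theorem hasDerivAt_aSucc_succ_div_aSucc {m : ℕ} {x : ℝ} (hx : aSucc m x ≠ 0) :
    HasDerivAt (fun y ↦ aSucc (m + 1) y / aSucc m y)
      (x ^ (m - 1) * ratioDerivFactor m x / aSucc m x ^ 2) x := by
  refine ((hasDerivAt_aSucc (m + 1) x).fun_div (hasDerivAt_aSucc m x) hx).congr_deriv ?_
  congr 1
  cases m with
  | zero => simp [aSucc] at hx
  | succ k =>
    simp only [aSucc, ratioDerivFactor, Nat.add_sub_cancel]
    push_cast
    ring

theorem ratioDerivFactor_nonneg {m : ℕ} (hm : 2 ≤ m) {x : ℝ} (hx : x ∈ Set.Icc 0 (3 / 5)) :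
    0 ≤ ratioDerivFactor m x := by
  unfold ratioDerivFactor
  obtain ⟨hx₀, hx₁⟩ := hx
  rcases hm.eq_or_lt with rfl | hm
  · -- Tangent line of `x ^ 3` at `3 / 5`.
    have htangent : 27 / 25 * x - 54 / 125 ≤ x ^ 3 := by
      have : 0 ≤ (x - 3 / 5) ^ 2 * (x + 6 / 5) := by positivity
      linarith
    simp only [Nat.cast_ofNat, Nat.reduceAdd]
    linarith
  · have hm₃ : (3 : ℝ) ≤ m := by exact_mod_cast hm
    have hlinear : 3 * (m + 1) * (2 * m + 5) * x ≤ 3 * m * (2 * m + 3) :=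
      calc 3 * (m + 1) * (2 * m + 5) * x ≤ 3 * (m + 1) * (2 * m + 5) * (3 / 5) := by gcongr
        _ ≤ 3 * m * (2 * m + 3) := by nlinarith
    have hpow : 0 ≤ (2 * m + 3) * (2 * m + 5) * x ^ (m + 1) := by positivity
    linarith

theorem monotoneOn_aSucc_succ_div_aSucc {m : ℕ} (hm : 2 ≤ m) :
    MonotoneOn (fun x ↦ aSucc (m + 1) x / aSucc m x) (Set.Icc 0 (3 / 5)) := by
  have hderiv {x : ℝ} (hx : x ∈ Set.Icc 0 (3 / 5)) :=
    hasDerivAt_aSucc_succ_div_aSucc (aSucc_pos hm hx).ne'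
  refine monotoneOn_of_hasDerivWithinAt_nonneg (convex_Icc 0 (3 / 5))
    (fun x hx ↦ (hderiv hx).continuousAt.continuousWithinAt)
    (fun x hx ↦ (hderiv (interior_subset hx)).hasDerivWithinAt) fun x hx ↦ ?_
  have hx' := interior_subset hx
  exact div_nonneg (mul_nonneg (pow_nonneg hx'.1 _) (ratioDerivFactor_nonneg hm hx'))
    (sq_nonneg _)

/-- For `c ∈ (0, 3/5]`, `a_n(c) = 3 − (2n+1)·c^(n−1)` and `n ≥ 3`, one has
`1 < a_{n+1}(c)/a_n(c) ≤ a_{n+1}(3/5)/a_n(3/5) ≤ 11/5`. -/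
theorem stmt_3 (c : ℝ) (hc : c ∈ Set.Ioc (0 : ℝ) (3 / 5)) (n : ℕ) (hn : 3 ≤ n)
    (a : ℕ → ℝ → ℝ) (ha : ∀ m x, a m x = 3 - (2 * (m : ℝ) + 1) * x ^ (m - 1)) :
    1 < a (n + 1) c / a n c ∧
      a (n + 1) c / a n c ≤ a (n + 1) (3 / 5) / a n (3 / 5) ∧
        a (n + 1) (3 / 5) / a n (3 / 5) ≤ 11 / 5 := by
  have ha_succ (m : ℕ) (x : ℝ) : a (m + 1) x = aSucc m x := by
    rw [ha, aSucc, Nat.add_sub_cancel]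
    push_cast
    ring
  obtain ⟨m, rfl⟩ := Nat.exists_eq_add_of_le' (show 1 ≤ n by lia)
  have hm : 2 ≤ m := by lia
  have hm_cast : (2 : ℝ) ≤ m := by exact_mod_cast hm
  have hc' : c ∈ Set.Icc 0 (3 / 5) := Set.Ioc_subset_Icc_self hc
  simp only [ha_succ]
  refine ⟨?_, monotoneOn_aSucc_succ_div_aSucc hm hc' (by norm_num) hc.2,
    aSucc_succ_div_aSucc_three_fifths_le hm⟩
  rw [one_lt_div (aSucc_pos hm hc')]
  exact aSucc_lt_aSucc_succ hc.1 (by nlinarith [hc.2])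
end

section
/- If p ∈ (0, 1] is such that sin(x)/x < (1/(3p²))·cos(px) + 1 − 1/(3p²) for all x ∈ (0, π/2), then p ≥ √15/5. -/
open Real

/-!
As `x → 0`, the right-hand side of the inequality minus `sin x / x` has the expansion
`(p² / 72 - 1 / 120) x⁴ + o(x⁴)`: the factor `1 / (3 p²)` is the one for which the terms in `x²`
cancel. An inequality that holds arbitrarily close to `0` therefore forces `p² / 72 ≥ 1 / 120`,
that is `p² ≥ 3 / 5`.
-/

open Filter Set
open scoped Nat Topology

theorem tendsto_inv_pow_smul_sub_taylorWithinEval {E : Type*} [NormedAddCommGroup E]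
    [NormedSpace ℝ E] {f : ℝ → E} {x₀ : ℝ} {n : ℕ} {s : Set ℝ} (hs : Convex ℝ s) (hx₀ : x₀ ∈ s)
    (hf : ContDiffOn ℝ (n + 1) f s) :
    Tendsto (fun x ↦ ((x - x₀) ^ (n + 1))⁻¹ • (f x - taylorWithinEval f n s x₀ x))
      (𝓝[s \ {x₀}] x₀) (𝓝 (taylorCoeffWithin f (n + 1) s x₀)) := by
  have remainder_tendsto : Tendsto
      (fun x ↦ ((x - x₀) ^ (n + 1))⁻¹ • (f x - taylorWithinEval f (n + 1) s x₀ x))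
      (𝓝[s \ {x₀}] x₀) (𝓝 0) :=
    (taylor_tendsto hs hx₀ (mod_cast hf)).mono_left (nhdsWithin_mono x₀ sdiff_subset)
  rw [← zero_add (taylorCoeffWithin f (n + 1) s x₀)]
  refine (remainder_tendsto.add_const _).congr' ?_
  filter_upwards [self_mem_nhdsWithin] with x hx
  have hpow : (x - x₀) ^ (n + 1) ≠ 0 := pow_ne_zero _ (sub_ne_zero.mpr hx.2)
  have last_term : (((n + 1 : ℝ) * n !)⁻¹ * (x - x₀) ^ (n + 1)) • iteratedDerivWithin (n + 1) f s x₀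
      = (x - x₀) ^ (n + 1) • taylorCoeffWithin f (n + 1) s x₀ := by
    rw [taylorCoeffWithin, smul_smul, Nat.factorial_succ, mul_comm, Nat.cast_mul, Nat.cast_succ]
  rw [taylorWithinEval_succ, last_term, ← sub_sub, smul_sub, inv_smul_smul₀ hpow, sub_add_cancel]

theorem tendsto_cos_sub_div_pow_four :
    Tendsto (fun x ↦ (cos x - (1 - x ^ 2 / 2)) / x ^ 4) (𝓝[≠] 0) (𝓝 (1 / 24)) := by
  have taylorPolynomial_eq (x : ℝ) : taylorWithinEval cos 3 univ 0 x = 1 - x ^ 2 / 2 := by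
    norm_num [iteratedDerivWithin_univ, sub_eq_add_neg, div_eq_inv_mul]
  have taylorCoeff_eq : taylorCoeffWithin cos 4 univ 0 = 1 / 24 := by
    simp [taylorCoeffWithin, iteratedDerivWithin_univ, Nat.factorial]
  have remainder := tendsto_inv_pow_smul_sub_taylorWithinEval (n := 3) convex_univ (mem_univ 0)
    contDiff_cos.contDiffOn
  simpa only [taylorPolynomial_eq, taylorCoeff_eq, sub_zero, smul_eq_mul, ← div_eq_inv_mul,
    ← compl_eq_univ_sdiff] using remainder

theorem tendsto_sin_div_sub_div_pow_four :
    Tendsto (fun x ↦ (sin x / x - (1 - x ^ 2 / 6)) / x ^ 4) (𝓝[≠] 0) (𝓝 (1 / 120)) := by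
  have taylorPolynomial_eq (x : ℝ) : taylorWithinEval sin 4 univ 0 x = x - x ^ 3 / 6 := by
    norm_num [iteratedDerivWithin_univ, Nat.factorial, sub_eq_add_neg, div_eq_inv_mul]
  have taylorCoeff_eq : taylorCoeffWithin sin 5 univ 0 = 1 / 120 := by
    simp [taylorCoeffWithin, iteratedDerivWithin_univ, Nat.factorial]
  have remainder := tendsto_inv_pow_smul_sub_taylorWithinEval (n := 4) convex_univ (mem_univ 0)
    contDiff_sin.contDiffOn
  simp only [taylorPolynomial_eq, taylorCoeff_eq, sub_zero, smul_eq_mul, ← div_eq_inv_mul,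
    ← compl_eq_univ_sdiff] at remainder
  refine remainder.congr' ?_
  filter_upwards [self_mem_nhdsWithin] with x (hx : x ≠ 0)
  field_simp
  ring

theorem tendsto_cos_mul_sub_sin_div_div_pow_four {p : ℝ} (hp : p ≠ 0) :
    Tendsto (fun x ↦ (1 / (3 * p ^ 2) * cos (p * x) + 1 - 1 / (3 * p ^ 2) - sin x / x) / x ^ 4)
      (𝓝[≠] 0) (𝓝 (p ^ 2 / 72 - 1 / 120)) := by
  have mul_tendsto : Tendsto (fun x ↦ p * x) (𝓝[≠] 0) (𝓝[≠] 0) := by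
    refine tendsto_nhdsWithin_iff.mpr ⟨?_, ?_⟩
    · exact (Continuous.tendsto' (by fun_prop) 0 0 (mul_zero p)).mono_left nhdsWithin_le_nhds
    · filter_upwards [self_mem_nhdsWithin] with x hx using mul_ne_zero hp hx
  have combined := ((tendsto_cos_sub_div_pow_four.comp mul_tendsto).const_mul (p ^ 2 / 3)).sub
    tendsto_sin_div_sub_div_pow_four
  convert! combined.congr' ?_ using 2
  · ring
  · filter_upwards [self_mem_nhdsWithin] with x (hx : x ≠ 0)
    simp only [Function.comp_apply]
    field_simp
    ring

theorem stmt_4_general {p : ℝ} (hp : p ≠ 0)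
    (h : ∃ᶠ x in 𝓝[≠] 0, sin x / x ≤ 1 / (3 * p ^ 2) * cos (p * x) + 1 - 1 / (3 * p ^ 2)) :
    √15 / 5 ≤ |p| := by
  have coeff_nonneg : 0 ≤ p ^ 2 / 72 - 1 / 120 :=
    ge_of_tendsto_of_frequently (tendsto_cos_mul_sub_sin_div_div_pow_four hp) <|
      h.mono fun x hx ↦ div_nonneg (sub_nonneg.mpr hx) (by positivity)
  refine (pow_le_pow_iff_left₀ (by positivity) (abs_nonneg p) two_ne_zero).mp ?_
  rw [div_pow, sq_sqrt (by norm_num), sq_abs]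
  linarith

/-- If `p ∈ (0, 1]` satisfies `sin x / x < (1/(3p²))·cos(px) + 1 − 1/(3p²)`
for all `x ∈ (0, π/2)`, then `p ≥ √15/5`. -/
theorem stmt_4 (p : ℝ) (hp : p ∈ Set.Ioc (0 : ℝ) 1)
    (h : ∀ x ∈ Set.Ioo (0 : ℝ) (π / 2),
      Real.sin x / x < 1 / (3 * p ^ 2) * Real.cos (p * x) + 1 - 1 / (3 * p ^ 2)) :
    Real.sqrt 15 / 5 ≤ p := by
  have h_right := eventually_of_mem (Ioo_mem_nhdsGT pi_div_two_pos) fun x hx ↦ (h x hx).le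
  simpa only [abs_of_pos hp.1] using
    stmt_4_general hp.1.ne' (h_right.frequently.filter_mono (nhdsGT_le_nhdsNE 0))
end

section
/- Let p₀ ∈ (0, 1) be the unique root of the equation 2/π = (1/(3p²))·cos(pπ/2) + 1 − 1/(3p²) in (0, 1). Then for every p with 0 < p ≤ p₀ and every x ∈ (0, π/2), one has (1/(3p²))·cos(px) + 1 − 1/(3p²) < sin(x)/x. -/
open Real

/-!
Rewritten with half-angles, the lower bound is `1 - x² / 6 * sinc (p x / 2) ²`, which increases with
`p` because `sinc` decreases on `[0, π]`; so only `p = p₀` matters. There the gap between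
`sin x / x` and the bound is `O(x⁴)`, and dividing it by `x⁴` gives a strictly decreasing function:
after clearing denominators, Taylor bounds reduce the sign of the derivative to that of a polynomial
in `p²` and `x²`, negative for `p ≤ 4 / 5` and `x ≤ π / 2`. Since the gap vanishes at `π / 2`, it is
positive before. That `p₀ < 4 / 5` is read off from `cos (2π / 5) = (√5 - 1) / 4`.
-/

open Set Finset
open scoped Nat

section TaylorBounds

/-- The sum of the first `n` nonzero terms of the Maclaurin series of `cos`. -/
noncomputable def cosTaylor (n : ℕ) (x : ℝ) : ℝ :=
  ∑ k ∈ range n, (-1) ^ k * (x ^ (2 * k) / (2 * k)!)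

/-- The sum of the first `n` nonzero terms of the Maclaurin series of `sin`. -/
noncomputable def sinTaylor (n : ℕ) (x : ℝ) : ℝ :=
  ∑ k ∈ range n, (-1) ^ k * (x ^ (2 * k + 1) / (2 * k + 1)!)

lemma hasDerivAt_pow_succ_div_factorial (m : ℕ) (x : ℝ) :
    HasDerivAt (fun y : ℝ ↦ y ^ (m + 1) / (m + 1)!) (x ^ m / m !) x := by
  refine ((hasDerivAt_pow (m + 1) x).div_const _).congr_deriv ?_
  rw [Nat.factorial_succ, Nat.add_sub_cancel]
  push_cast
  field_simp

lemma hasDerivAt_sinTaylor (n : ℕ) (x : ℝ) : HasDerivAt (sinTaylor n) (cosTaylor n x) x :=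
  HasDerivAt.fun_sum fun k _ ↦ (hasDerivAt_pow_succ_div_factorial (2 * k) x).const_mul _

lemma cosTaylor_succ (n : ℕ) (x : ℝ) :
    cosTaylor (n + 1) x =
      1 - ∑ k ∈ range n, (-1) ^ k * (x ^ (2 * k + 1 + 1) / (2 * k + 1 + 1)!) := by
  simp [cosTaylor, sum_range_succ', pow_succ, mul_add, sub_eq_neg_add]

lemma hasDerivAt_cosTaylor_succ (n : ℕ) (x : ℝ) :
    HasDerivAt (cosTaylor (n + 1)) (-sinTaylor n x) x := by
  rw [funext (cosTaylor_succ n)]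
  exact (HasDerivAt.fun_sum fun k _ ↦
    (hasDerivAt_pow_succ_div_factorial (2 * k + 1) x).const_mul _).const_sub 1

lemma nonneg_of_hasDerivAt_nonneg {f f' : ℝ → ℝ} (h0 : f 0 = 0)
    (hf : ∀ x, HasDerivAt f (f' x) x) (hf' : ∀ x, 0 ≤ x → 0 ≤ f' x) {x : ℝ} (hx : 0 ≤ x) :
    0 ≤ f x := by
  have hmono : MonotoneOn f (Ici 0) :=
    monotoneOn_of_hasDerivWithinAt_nonneg (convex_Ici 0)
      (fun y _ ↦ (hf y).continuousAt.continuousWithinAt) (fun y _ ↦ (hf y).hasDerivWithinAt)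
      fun y hy ↦ hf' y (interior_subset hy)
  simpa only [h0] using hmono self_mem_Ici hx hx

lemma sinTaylor_sub_sin_nonneg_of_cosTaylor (n : ℕ)
    (hcos : ∀ x, 0 ≤ x → 0 ≤ (-1) ^ n * (cosTaylor (n + 1) x - cos x)) {x : ℝ} (hx : 0 ≤ x) :
    0 ≤ (-1) ^ n * (sinTaylor (n + 1) x - sin x) :=
  nonneg_of_hasDerivAt_nonneg (by simp [sinTaylor])
    (fun y ↦ ((hasDerivAt_sinTaylor (n + 1) y).sub (hasDerivAt_sin y)).const_mul _) hcos hx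

lemma cosTaylor_sub_cos_nonneg (n : ℕ) {x : ℝ} (hx : 0 ≤ x) :
    0 ≤ (-1) ^ n * (cosTaylor (n + 1) x - cos x) := by
  induction n generalizing x with
  | zero => simpa [cosTaylor] using cos_le_one x
  | succ n ih =>
    refine nonneg_of_hasDerivAt_nonneg (by simp [cosTaylor_succ])
      (fun y ↦ ((hasDerivAt_cosTaylor_succ (n + 1) y).sub (hasDerivAt_cos y)).const_mul _)
      (fun y hy ↦ ?_) hx
    convert sinTaylor_sub_sin_nonneg_of_cosTaylor n (fun z hz ↦ ih hz) hy using 1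
    ring

lemma sinTaylor_sub_sin_nonneg (n : ℕ) {x : ℝ} (hx : 0 ≤ x) :
    0 ≤ (-1) ^ n * (sinTaylor (n + 1) x - sin x) :=
  sinTaylor_sub_sin_nonneg_of_cosTaylor n (fun _ hy ↦ cosTaylor_sub_cos_nonneg n hy) hx

lemma cos_le_taylor_eight {x : ℝ} (hx : 0 ≤ x) :
    cos x ≤ 1 - x ^ 2 / 2 + x ^ 4 / 24 - x ^ 6 / 720 + x ^ 8 / 40320 := by
  have h := cosTaylor_sub_cos_nonneg 4 hx
  norm_num [cosTaylor, sum_range_succ, Nat.factorial] at h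
  linarith

lemma sin_le_taylor_nine {x : ℝ} (hx : 0 ≤ x) :
    sin x ≤ x - x ^ 3 / 6 + x ^ 5 / 120 - x ^ 7 / 5040 + x ^ 9 / 362880 := by
  have h := sinTaylor_sub_sin_nonneg 4 hx
  norm_num [sinTaylor, sum_range_succ, Nat.factorial] at h
  linarith

lemma taylor_eleven_le_sin {x : ℝ} (hx : 0 ≤ x) :
    x - x ^ 3 / 6 + x ^ 5 / 120 - x ^ 7 / 5040 + x ^ 9 / 362880 - x ^ 11 / 39916800 ≤ sin x := by
  have h := sinTaylor_sub_sin_nonneg 5 hx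
  norm_num [sinTaylor, sum_range_succ, Nat.factorial] at h
  linarith

end TaylorBounds

section CosApprox

/-- The approximation `1 - (1 - cos (p x)) / (3 p²)` of `sin x / x`. The coefficient `1 / (3 p²)`
makes the two functions agree up to `O(x⁴)`; at `p = 0` it is the junk value `0`. -/
noncomputable def cosApprox (p x : ℝ) : ℝ :=
  1 / (3 * p ^ 2) * cos (p * x) + 1 - 1 / (3 * p ^ 2)

lemma antitoneOn_sinc : AntitoneOn sinc (Icc 0 π) := by
  rintro x ⟨hx, -⟩ y ⟨-, hy⟩ hxy
  obtain rfl | hx := hx.eq_or_lt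
  · simpa using sinc_le_one y
  have hy0 : 0 < y := hx.trans_le hxy
  have hslope := strictConcaveOn_sin_Icc.concaveOn.antitoneOn_slope_gt (left_mem_Icc.2 pi_pos.le)
    ⟨⟨hx.le, hxy.trans hy⟩, hx⟩ ⟨⟨hy0.le, hy⟩, hy0⟩ hxy
  simpa [slope_def_field, sinc_of_ne_zero, hx.ne', hy0.ne'] using hslope

lemma cosApprox_eq_one_sub_sinc_sq {p : ℝ} (hp : p ≠ 0) (x : ℝ) :
    cosApprox p x = 1 - x ^ 2 / 6 * sinc (p * x / 2) ^ 2 := by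
  obtain rfl | hx := eq_or_ne x 0
  · simp [cosApprox]
  have hcos : cos (p * x) = 1 - 2 * sin (p * x / 2) ^ 2 := by
    rw [← cos_two_mul_eq_one_sub, mul_div_cancel₀ _ two_ne_zero]
  rw [cosApprox, hcos, sinc_of_ne_zero (by positivity)]
  field_simp
  ring

lemma cosApprox_le_cosApprox {p q x : ℝ} (hp : 0 < p) (hpq : p ≤ q) (hx : 0 ≤ x)
    (hqx : q * x ≤ 2 * π) : cosApprox p x ≤ cosApprox q x := by
  have hq : 0 < q := hp.trans_le hpq
  have hle : p * x / 2 ≤ q * x / 2 := by gcongr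
  have hq_mem : q * x / 2 ∈ Icc 0 π := ⟨by positivity, by linarith⟩
  have hsinc_nonneg : 0 ≤ sinc (q * x / 2) := by
    simpa [sinc_of_ne_zero pi_ne_zero] using
      antitoneOn_sinc hq_mem (right_mem_Icc.2 pi_pos.le) hq_mem.2
  have hsinc : sinc (q * x / 2) ≤ sinc (p * x / 2) :=
    antitoneOn_sinc ⟨by positivity, hle.trans hq_mem.2⟩ hq_mem hle
  rw [cosApprox_eq_one_sub_sinc_sq hp.ne', cosApprox_eq_one_sub_sinc_sq hq.ne']
  gcongr

lemma cos_two_mul_pi_div_five : cos (2 * (π / 5)) = (√5 - 1) / 4 := by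
  rw [cos_two_mul, cos_pi_div_five]
  linear_combination Real.sq_sqrt (show (0 : ℝ) ≤ 5 by norm_num) / 8

lemma two_div_pi_lt_cosApprox_four_fifths : 2 / π < cosApprox (4 / 5) (π / 2) := by
  have hsqrt : (2.236 : ℝ) < √5 := Real.lt_sqrt_of_sq_lt (by norm_num)
  have hvalue : cosApprox (4 / 5) (π / 2) = 1 - 25 / 192 * (5 - √5) := by
    rw [cosApprox, show 4 / 5 * (π / 2) = 2 * (π / 5) by ring, cos_two_mul_pi_div_five]
    ring
  calc 2 / π < 2 / 3.14 := by gcongr; exact pi_gt_d2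
    _ < 1 - 25 / 192 * (5 - √5) := by linarith
    _ = cosApprox (4 / 5) (π / 2) := hvalue.symm

lemma lt_four_fifths_of_cosApprox_le {q : ℝ} (hq : q ≤ 4)
    (h : cosApprox q (π / 2) ≤ 2 / π) : q < 4 / 5 := by
  by_contra! hle
  have hmono : cosApprox (4 / 5) (π / 2) ≤ cosApprox q (π / 2) :=
    cosApprox_le_cosApprox (by norm_num) hle (by positivity) (by nlinarith [pi_pos])
  exact (two_div_pi_lt_cosApprox_four_fifths.trans_le (hmono.trans h)).false

end CosApprox

section ScaledGap

/-- The error of `cosApprox p` as an approximation of `sin x / x`, divided by its order of vanishing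
`x⁴` at `0`. -/
noncomputable def scaledGap (p x : ℝ) : ℝ :=
  (sin x / x - cosApprox p x) / x ^ 4

/-- The derivative of `scaledGap p` with its denominator `x⁶` cleared. -/
noncomputable def scaledGapDerivNum (p x : ℝ) : ℝ :=
  x * cos x - 5 * sin x + 4 * x + x / (3 * p ^ 2) * (p * x * sin (p * x) - 4 * (1 - cos (p * x)))

lemma hasDerivAt_cosApprox (p x : ℝ) :
    HasDerivAt (cosApprox p) (1 / (3 * p ^ 2) * (-sin (p * x) * p)) x := by
  have hcos : HasDerivAt (fun y ↦ cos (p * y)) (-sin (p * x) * p) x := by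
    simpa using ((hasDerivAt_id x).const_mul p).cos
  exact ((hcos.const_mul _).add_const 1).sub_const _

lemma hasDerivAt_scaledGap {p x : ℝ} (hp : p ≠ 0) (hx : x ≠ 0) :
    HasDerivAt (scaledGap p) (scaledGapDerivNum p x / x ^ 6) x := by
  refine ((((hasDerivAt_sin x).div (hasDerivAt_id x) hx).sub (hasDerivAt_cosApprox p x)).div
    (hasDerivAt_pow 4 x) (pow_ne_zero 4 hx)).congr_deriv ?_
  simp only [id, cosApprox, scaledGapDerivNum, Pi.sub_apply, Pi.div_apply]
  field_simp
  ring

lemma mul_cos_sub_five_mul_sin_le {x : ℝ} (hx : 0 ≤ x) :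
    x * cos x - 5 * sin x + 4 * x ≤
      x ^ 3 / 3 - x ^ 7 / 2520 + x ^ 9 / 90720 + x ^ 11 / 7983360 := by
  have hcos := mul_le_mul_of_nonneg_left (cos_le_taylor_eight hx) hx
  have hsin := taylor_eleven_le_sin hx
  linarith

lemma mul_sin_sub_four_mul_one_sub_cos_le {u : ℝ} (hu : 0 ≤ u) :
    u * sin u - 4 * (1 - cos u) ≤ -u ^ 2 + u ^ 6 / 360 - u ^ 8 / 10080 + u ^ 10 / 362880 := by
  have hsin := mul_le_mul_of_nonneg_left (sin_le_taylor_nine hu) hu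
  have hcos := cos_le_taylor_eight hu
  linarith

lemma scaledGapDerivNum_le {p x : ℝ} (hp : 0 < p) (hx : 0 ≤ x) :
    scaledGapDerivNum p x ≤
      x ^ 7 * (-1 / 2520 + (p ^ 2) ^ 2 / 1080 + (1 / 90720 - (p ^ 2) ^ 3 / 30240) * x ^ 2
        + (1 / 7983360 + (p ^ 2) ^ 4 / 1088640) * (x ^ 2) ^ 2) := by
  have hp_part := mul_le_mul_of_nonneg_left
    (mul_sin_sub_four_mul_one_sub_cos_le (u := p * x) (by positivity))
    (show 0 ≤ x / (3 * p ^ 2) by positivity)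
  refine (add_le_add (mul_cos_sub_five_mul_sin_le hx) hp_part).trans_eq ?_
  field_simp
  ring

lemma scaledGapDerivNum_polynomial_neg {s t : ℝ} (hs : 0 ≤ s) (hs' : s ≤ 16 / 25) (ht : 0 ≤ t)
    (ht' : t ≤ 5 / 2) :
    -1 / 2520 + s ^ 2 / 1080 + (1 / 90720 - s ^ 3 / 30240) * t
      + (1 / 7983360 + s ^ 4 / 1088640) * t ^ 2 < 0 := by
  have hs3 : s ^ 3 ≤ (16 / 25) ^ 3 := by gcongr
  have hlinear : (1 / 90720 - s ^ 3 / 30240) * t ≤ (1 / 90720 - s ^ 3 / 30240) * (5 / 2) :=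
    mul_le_mul_of_nonneg_left ht' (by linarith)
  have hquadratic : (1 / 7983360 + s ^ 4 / 1088640) * t ^ 2 ≤
      (1 / 7983360 + (16 / 25) ^ 4 / 1088640) * (5 / 2) ^ 2 := by gcongr
  have hcubic : s ^ 2 * (1 / 1080 - s / 12096) ≤ (16 / 25) ^ 2 * (1 / 1080 - 16 / 25 / 12096) := by
    nlinarith [mul_nonneg hs (sub_nonneg.2 hs')]
  linarith

lemma scaledGapDerivNum_neg {p x : ℝ} (hp : 0 < p) (hp' : p ≤ 4 / 5) (hx : 0 < x)
    (hx' : x ≤ 63 / 40) : scaledGapDerivNum p x < 0 :=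
  (scaledGapDerivNum_le hp hx.le).trans_lt <| mul_neg_of_pos_of_neg (pow_pos hx 7) <|
    scaledGapDerivNum_polynomial_neg (sq_nonneg p) (by nlinarith) (sq_nonneg x) (by nlinarith)

lemma strictAntiOn_scaledGap {p : ℝ} (hp : 0 < p) (hp' : p ≤ 4 / 5) :
    StrictAntiOn (scaledGap p) (Ioc 0 (63 / 40)) := by
  have hderiv {x : ℝ} (hx : 0 < x) := hasDerivAt_scaledGap hp.ne' hx.ne'
  refine strictAntiOn_of_hasDerivWithinAt_neg (convex_Ioc _ _)
    (fun x hx ↦ (hderiv hx.1).continuousAt.continuousWithinAt)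
    (fun x hx ↦ (hderiv (interior_subset hx).1).hasDerivWithinAt) fun x hx ↦ ?_
  obtain ⟨hx0, hx1⟩ := interior_subset hx
  exact div_neg_of_neg_of_pos (scaledGapDerivNum_neg hp hp' hx0 hx1) (pow_pos hx0 6)

lemma cosApprox_lt_sin_div_of_le {p x b : ℝ} (hp : 0 < p) (hp' : p ≤ 4 / 5) (hx : 0 < x)
    (hxb : x < b) (hb : b ≤ 63 / 40) (h : cosApprox p b ≤ sin b / b) :
    cosApprox p x < sin x / x := by
  have hb0 : 0 < b := hx.trans hxb
  have hgap : 0 < scaledGap p x :=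
    calc 0 ≤ scaledGap p b := div_nonneg (sub_nonneg.2 h) (by positivity)
      _ < scaledGap p x := strictAntiOn_scaledGap hp hp' ⟨hx, hxb.le.trans hb⟩ ⟨hb0, hb⟩ hxb
  exact sub_pos.1 ((div_pos_iff_of_pos_right (pow_pos hx 4)).1 hgap)

end ScaledGap

/-- If `p₀` is the unique root in `(0,1)` of `2/π = (1/(3p²))·cos(pπ/2) + 1 − 1/(3p²)`,
then for every `0 < p ≤ p₀` and `x ∈ (0, π/2)`,
`(1/(3p²))·cos(px) + 1 − 1/(3p²) < sin x / x`. -/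
theorem stmt_8 (p₀ : ℝ) (hp₀ : p₀ ∈ Set.Ioo (0 : ℝ) 1)
    (hroot : 2 / π = 1 / (3 * p₀ ^ 2) * Real.cos (p₀ * π / 2) + 1 - 1 / (3 * p₀ ^ 2))
    (huniq : ∀ p ∈ Set.Ioo (0 : ℝ) 1,
      2 / π = 1 / (3 * p ^ 2) * Real.cos (p * π / 2) + 1 - 1 / (3 * p ^ 2) → p = p₀)
    (p : ℝ) (hp : 0 < p) (hpp₀ : p ≤ p₀) (x : ℝ) (hx : x ∈ Set.Ioo (0 : ℝ) (π / 2)) :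
    1 / (3 * p ^ 2) * Real.cos (p * x) + 1 - 1 / (3 * p ^ 2) < Real.sin x / x := by
  obtain ⟨hp₀_pos, hp₀_lt⟩ := hp₀
  obtain ⟨hx_pos, hx_lt⟩ := hx
  have hroot' : cosApprox p₀ (π / 2) = 2 / π := by rw [cosApprox, ← mul_div_assoc, hroot]
  have hp₀_lt' : p₀ < 4 / 5 := lt_four_fifths_of_cosApprox_le (by linarith) hroot'.le
  calc cosApprox p x ≤ cosApprox p₀ x :=
        cosApprox_le_cosApprox hp hpp₀ hx_pos.le (by nlinarith)
    _ < sin x / x := cosApprox_lt_sin_div_of_le hp₀_pos hp₀_lt'.le hx_pos hx_lt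
        (by linarith [pi_lt_d2]) (by simp [hroot'])
end

section
/- For every p with 0 < p ≤ √15/5 and every x > 0, one has (1/(3p²))·cosh(px) + 1 − 1/(3p²) < sinh(x)/x. Moreover, if p > 0 is such that this inequality holds for all x > 0, then p ≤ √15/5. -/
/-!
Expanding in even powers of `x`,
`sinh x / x - (cosh (p x) / (3 p²) + 1 - 1 / (3 p²)) = ∑ₙ cₙ x ^ (2 n + 4)` with
`cₙ = (1 - (2 n + 5) p ^ (2 (n + 1)) / 3) / (2 n + 5)!`: the weight `1 / (3 p²)` is the one that
cancels the quadratic term. The sign of `c₀` is that of `3 / 5 - p²`, and `p² ≤ 3 / 5` makes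
every `cₙ` nonnegative, with `c₁ > 0`, because `(2 n + 5) (3 / 5) ^ n` decreases. Conversely,
the difference divided by `x ^ 4` tends to `c₀` as `x → 0`.
-/

open Filter Topology

/-- The difference `sinh x / x - (cosh (p x) / (3 p²) + 1 - 1 / (3 p²))` whose sign is at stake.
It is meaningful for `p ≠ 0` and `x ≠ 0` only. -/
noncomputable def sinhCoshGap (p x : ℝ) : ℝ :=
  Real.sinh x / x - (1 / (3 * p ^ 2) * Real.cosh (p * x) + 1 - 1 / (3 * p ^ 2))

/-- The coefficient of `x ^ (2 * n + 4)` in the Taylor series of `sinhCoshGap p` at `0`; the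
indexing skips the two lowest coefficients, which vanish. -/
noncomputable def sinhCoshGapCoeff (p : ℝ) (n : ℕ) : ℝ :=
  (1 - (2 * n + 5) * (p ^ 2) ^ (n + 1) / 3) / (2 * n + 5).factorial

lemma hasSum_sinh_div_self {x : ℝ} (hx : x ≠ 0) :
    HasSum (fun n : ℕ ↦ x ^ (2 * n) / (2 * n + 1).factorial) (Real.sinh x / x) := by
  refine ((Real.hasSum_sinh x).div_const x).congr_fun fun n ↦ ?_
  rw [pow_succ, mul_div_right_comm, mul_div_cancel_right₀ _ hx]

lemma hasSum_sinhCoshGap_div_pow_four {p x : ℝ} (hp : p ≠ 0) (hx : x ≠ 0) :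
    HasSum (fun n ↦ sinhCoshGapCoeff p n * x ^ (2 * n)) (sinhCoshGap p x / x ^ 4) := by
  have series := (hasSum_sinh_div_self hx).sub
    ((Real.hasSum_cosh (p * x)).mul_left (1 / (3 * p ^ 2)))
  have tail := ((hasSum_nat_add_iff' 2).2 series).div_const (x ^ 4)
  have factorial_odd (n : ℕ) :
      ((2 * (n + 2) + 1).factorial : ℝ) = (2 * n + 5) * (2 * (n + 2)).factorial := by
    rw [Nat.factorial_succ]; push_cast; ring
  have value_eq : sinhCoshGap p x = Real.sinh x / x - 1 / (3 * p ^ 2) * Real.cosh (p * x) -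
      ∑ n ∈ Finset.range 2, (x ^ (2 * n) / (2 * n + 1).factorial -
        1 / (3 * p ^ 2) * ((p * x) ^ (2 * n) / (2 * n).factorial)) := by
    simp only [sinhCoshGap, Finset.sum_range_succ, Finset.sum_range_zero, Nat.factorial]
    push_cast
    field_simp
    ring
  rw [value_eq]
  refine tail.congr_fun fun n ↦ ?_
  rw [sinhCoshGapCoeff, show 2 * n + 5 = 2 * (n + 2) + 1 by ring, factorial_odd]
  field_simp
  ring

lemma two_mul_add_five_mul_pow_le_three {q : ℝ} (hq₀ : 0 ≤ q) (hq : q ≤ 3 / 5) (n : ℕ) :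
    (2 * n + 5) * q ^ (n + 1) ≤ 3 := by
  induction n with
  | zero => norm_num; linarith
  | succ n ih =>
    have ratio_le_one : (2 * (n + 1 : ℕ) + 5) * q ≤ 2 * n + 5 := by
      push_cast; nlinarith [n.cast_nonneg (α := ℝ)]
    calc (2 * (n + 1 : ℕ) + 5) * q ^ (n + 1 + 1)
        = (2 * (n + 1 : ℕ) + 5) * q * q ^ (n + 1) := by ring
      _ ≤ (2 * n + 5) * q ^ (n + 1) := by gcongr
      _ ≤ 3 := ih

lemma sinhCoshGapCoeff_nonneg {p : ℝ} (hp : p ^ 2 ≤ 3 / 5) (n : ℕ) :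
    0 ≤ sinhCoshGapCoeff p n :=
  div_nonneg (by linarith [two_mul_add_five_mul_pow_le_three (sq_nonneg p) hp n]) (by positivity)

lemma sinhCoshGapCoeff_one_pos {p : ℝ} (hp : p ^ 2 ≤ 3 / 5) : 0 < sinhCoshGapCoeff p 1 := by
  have sq_le : (p ^ 2) ^ 2 ≤ (3 / 5) ^ 2 := by gcongr
  exact div_pos (by norm_num at sq_le ⊢; linarith) (by positivity)

lemma sinhCoshGapCoeff_zero (p : ℝ) : sinhCoshGapCoeff p 0 = (3 / 5 - p ^ 2) / 72 := by
  simp only [sinhCoshGapCoeff, Nat.factorial]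
  push_cast
  ring

lemma sinhCoshGapCoeff_le (p : ℝ) (n : ℕ) :
    sinhCoshGapCoeff p n ≤ 1 / (2 * n + 5).factorial := by
  unfold sinhCoshGapCoeff
  gcongr
  exact sub_le_self _ (by positivity)

lemma sinhCoshGap_pos {p x : ℝ} (hp₀ : p ≠ 0) (hp : p ^ 2 ≤ 3 / 5) (hx : x ≠ 0) :
    0 < sinhCoshGap p x := by
  have quotient_pos : 0 < sinhCoshGap p x / x ^ 4 :=
    hasSum_lt (i := 1)
      (fun n ↦ mul_nonneg (sinhCoshGapCoeff_nonneg hp n) ((even_two_mul n).pow_nonneg x))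
      (mul_pos (sinhCoshGapCoeff_one_pos hp) ((even_two_mul 1).pow_pos hx))
      hasSum_zero (hasSum_sinhCoshGap_div_pow_four hp₀ hx)
  exact (div_pos_iff_of_pos_right (by positivity)).1 quotient_pos

lemma sinhCoshGap_div_pow_four_le {p x : ℝ} (hp : p ≠ 0) (hx : x ≠ 0) :
    sinhCoshGap p x / x ^ 4 ≤ sinhCoshGapCoeff p 0 + x ^ 2 * Real.cosh x := by
  have tail := (hasSum_nat_add_iff' 1).2 (hasSum_sinhCoshGap_div_pow_four hp hx)
  have tail_le := hasSum_le (fun n ↦ ?_) tail ((Real.hasSum_cosh x).mul_left (x ^ 2))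
  · simp only [Finset.sum_range_one, mul_zero, pow_zero, mul_one] at tail_le
    linarith
  have even_pow_nonneg (m : ℕ) : 0 ≤ x ^ (2 * m) := (even_two_mul m).pow_nonneg x
  calc sinhCoshGapCoeff p (n + 1) * x ^ (2 * (n + 1))
      ≤ 1 / (2 * (n + 1) + 5).factorial * x ^ (2 * (n + 1)) :=
        mul_le_mul_of_nonneg_right (sinhCoshGapCoeff_le p (n + 1)) (even_pow_nonneg _)
    _ ≤ 1 / (2 * n).factorial * x ^ (2 * (n + 1)) := by
        have := even_pow_nonneg (n + 1)
        gcongr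
        lia
    _ = x ^ 2 * (x ^ (2 * n) / (2 * n).factorial) := by ring

lemma sq_le_of_frequently_sinhCoshGap_pos {p : ℝ} (hp : p ≠ 0)
    (hgap : ∃ᶠ x in 𝓝[≠] 0, 0 < sinhCoshGap p x) : p ^ 2 ≤ 3 / 5 := by
  have bound_tendsto : Tendsto (fun x ↦ sinhCoshGapCoeff p 0 + x ^ 2 * Real.cosh x)
      (𝓝[≠] 0) (𝓝 (sinhCoshGapCoeff p 0)) := by
    have : Continuous fun x ↦ sinhCoshGapCoeff p 0 + x ^ 2 * Real.cosh x := by fun_prop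
    simpa using (this.tendsto 0).mono_left nhdsWithin_le_nhds
  have bound_nonneg : ∃ᶠ x in 𝓝[≠] 0, 0 ≤ sinhCoshGapCoeff p 0 + x ^ 2 * Real.cosh x :=
    (hgap.and_eventually self_mem_nhdsWithin).mono fun x ⟨gap_pos, hx⟩ ↦
      (by positivity : 0 ≤ sinhCoshGap p x / x ^ 4).trans (sinhCoshGap_div_pow_four_le hp hx)
  have coeff_nonneg : 0 ≤ sinhCoshGapCoeff p 0 :=
    ge_of_tendsto_of_frequently bound_tendsto bound_nonneg
  linarith [sinhCoshGapCoeff_zero p]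

lemma abs_le_sqrt_fifteen_div_five_iff {p : ℝ} : |p| ≤ Real.sqrt 15 / 5 ↔ p ^ 2 ≤ 3 / 5 := by
  rw [← sq_le_sq₀ (abs_nonneg p) (by positivity), sq_abs, div_pow, Real.sq_sqrt (by norm_num)]
  norm_num

theorem stmt_9_general {p : ℝ} (hp : p ≠ 0) :
    (|p| ≤ Real.sqrt 15 / 5 → ∀ x : ℝ, x ≠ 0 →
      1 / (3 * p ^ 2) * Real.cosh (p * x) + 1 - 1 / (3 * p ^ 2) < Real.sinh x / x) ∧
    ((∃ᶠ x in 𝓝[≠] 0,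
        1 / (3 * p ^ 2) * Real.cosh (p * x) + 1 - 1 / (3 * p ^ 2) < Real.sinh x / x) →
      |p| ≤ Real.sqrt 15 / 5) := by
  simp only [abs_le_sqrt_fifteen_div_five_iff, ← sub_pos (a := Real.sinh _ / _)]
  exact ⟨fun hle _ hx ↦ sinhCoshGap_pos hp hle hx, sq_le_of_frequently_sinhCoshGap_pos hp⟩

/-- For `0 < p ≤ √15/5` and `x > 0`,
`(1/(3p²))·cosh(px) + 1 − 1/(3p²) < sinh x / x`; moreover `√15/5` is the largest
such constant. -/
theorem stmt_9 :
    (∀ p : ℝ, 0 < p → p ≤ Real.sqrt 15 / 5 → ∀ x : ℝ, 0 < x →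
      1 / (3 * p ^ 2) * Real.cosh (p * x) + 1 - 1 / (3 * p ^ 2) < Real.sinh x / x) ∧
    (∀ p : ℝ, 0 < p →
      (∀ x : ℝ, 0 < x →
        1 / (3 * p ^ 2) * Real.cosh (p * x) + 1 - 1 / (3 * p ^ 2) < Real.sinh x / x) →
      p ≤ Real.sqrt 15 / 5) := by
  exact ⟨fun p hp hle x hx ↦ (stmt_9_general hp.ne').1 ((abs_of_pos hp).trans_le hle) x hx.ne',
    fun p hp h ↦ (le_abs_self p).trans <| (stmt_9_general hp.ne').2 <|
      (eventually_nhdsWithin_of_forall (s := Set.Ioi 0) h).frequently.filter_mono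
        (nhdsGT_le_nhdsNE 0)⟩
end

section
/- For every q ≥ 1 and every x > 0, one has sinh(x)/x < (1/(3q²))·cosh(qx) + 1 − 1/(3q²). Moreover, if q > 0 is such that this inequality holds for all x > 0, then q ≥ 1. -/
/-!
For `n ≥ 1` the coefficients of `x^(2n) / (2n)!` in the power series of `sinh x / x - 1` and of
`(cosh (q x) - 1) / (3 q²)` are `1 / (2n+1)` and `q^(2n-2) / 3`. They agree at `n = 1`, and for
`|q| ≥ 1` the second is larger as soon as `n ≥ 2`. Conversely, for `|q| < 1` the function
`x cosh (q x)` grows more slowly than `sinh x`, so no inequality `sinh x / x ≤ a cosh (q x) + b`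
can persist for large `x`.
-/

open Asymptotics Filter Real
open scoped Nat

theorem hasSum_cosh_sub_one (x : ℝ) :
    HasSum (fun n : ℕ ↦ x ^ (2 * (n + 1)) / (2 * (n + 1))!) (cosh x - 1) := by
  simpa using (hasSum_nat_add_iff' 1).mpr (hasSum_cosh x)

theorem hasSum_sinh_div_self_sub_one {x : ℝ} (hx : x ≠ 0) :
    HasSum (fun n : ℕ ↦ x ^ (2 * (n + 1)) / (2 * (n + 1) + 1)!) (sinh x / x - 1) := by
  have hasSum_sinh_div_self :
      HasSum (fun n : ℕ ↦ x ^ (2 * n) / (2 * n + 1)!) (sinh x / x) := by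
    refine ((hasSum_sinh x).div_const x).congr_fun fun n ↦ ?_
    rw [pow_succ, div_right_comm, mul_div_cancel_right₀ _ hx]
  simpa using (hasSum_nat_add_iff' 1).mpr hasSum_sinh_div_self

theorem sinh_div_self_sub_one_lt {q x : ℝ} (hq : 1 ≤ |q|) (hx : x ≠ 0) :
    sinh x / x - 1 < (cosh (q * x) - 1) / (3 * q ^ 2) := by
  have hq0 : q ≠ 0 := abs_pos.mp (one_pos.trans_le hq)
  have sinh_term (n : ℕ) : x ^ (2 * (n + 1)) / (2 * (n + 1) + 1)! =
      x ^ (2 * (n + 1)) / (2 * (n + 1))! * (1 / (2 * n + 3)) := by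
    rw [Nat.factorial_succ]
    push_cast
    field_simp
    ring
  have cosh_term (n : ℕ) : (q * x) ^ (2 * (n + 1)) / (2 * (n + 1))! / (3 * q ^ 2) =
      x ^ (2 * (n + 1)) / (2 * (n + 1))! * ((q ^ 2) ^ n / 3) := by
    field_simp
    ring
  have coeff_le (n : ℕ) : (1 / (2 * n + 3) : ℝ) ≤ (q ^ 2) ^ n / 3 :=
    calc (1 / (2 * n + 3) : ℝ) ≤ 1 / 3 := by gcongr; linarith [n.cast_nonneg (α := ℝ)]
      _ ≤ (q ^ 2) ^ n / 3 := by gcongr; exact one_le_pow₀ ((one_le_sq_iff_one_le_abs q).mpr hq)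
  have coeff_lt : (1 / (2 * (1 : ℕ) + 3) : ℝ) < (q ^ 2) ^ 1 / 3 := by
    have := (one_le_sq_iff_one_le_abs q).mpr hq
    norm_num
    linarith
  refine hasSum_lt (i := 1) (fun n ↦ ?_) ?_ (hasSum_sinh_div_self_sub_one hx)
    ((hasSum_cosh_sub_one (q * x)).div_const _)
  · rw [sinh_term, cosh_term]
    have := (even_two_mul (n + 1)).pow_nonneg x
    exact mul_le_mul_of_nonneg_left (coeff_le n) (by positivity)
  · rw [sinh_term, cosh_term]
    have := (even_two_mul (1 + 1)).pow_pos hx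
    exact mul_lt_mul_of_pos_left coeff_lt (by positivity)

theorem cosh_le_exp_abs (x : ℝ) : cosh x ≤ exp |x| := by
  rw [← cosh_abs, ← cosh_add_sinh |x|]
  exact le_add_of_nonneg_right (sinh_nonneg_iff.mpr (abs_nonneg x))

theorem exp_isBigO_sinh_atTop : exp =O[atTop] sinh := by
  refine IsBigO.of_bound 4 ?_
  filter_upwards [eventually_ge_atTop 1] with x hx
  have exp_neg_le : exp (-x) ≤ 1 := exp_le_one_iff.mpr (by linarith)
  have two_le_exp : 2 ≤ exp x := by linarith [add_one_le_exp x]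
  rw [norm_of_nonneg (exp_pos x).le, norm_of_nonneg (sinh_nonneg_iff.mpr (by linarith)), sinh_eq]
  linarith

theorem mul_cosh_mul_isLittleO_sinh_atTop {q : ℝ} (hq : |q| < 1) :
    (fun x ↦ x * cosh (q * x)) =o[atTop] sinh := by
  have cosh_isBigO : (fun x ↦ cosh (q * x)) =O[atTop] fun x ↦ exp (|q| * x) := by
    refine IsBigO.of_norm_eventuallyLE ?_
    filter_upwards [eventually_ge_atTop 0] with x hx
    simpa [abs_mul, abs_of_nonneg hx, abs_of_pos (cosh_pos _)] using cosh_le_exp_abs (q * x)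
  have id_isLittleO : (fun x : ℝ ↦ x) =o[atTop] fun x ↦ exp ((1 - |q|) * x) := by
    simpa using isLittleO_pow_exp_pos_mul_atTop 1 (sub_pos.mpr hq)
  refine ((id_isLittleO.mul_isBigO cosh_isBigO).congr_right fun x ↦ ?_).trans_isBigO
    exp_isBigO_sinh_atTop
  rw [← exp_add]
  ring_nf

theorem eventually_mul_cosh_add_lt_sinh_div_self {q : ℝ} (hq : |q| < 1) (a b : ℝ) :
    ∀ᶠ x in atTop, a * cosh (q * x) + b < sinh x / x := by
  have id_isLittleO : (fun x : ℝ ↦ x) =o[atTop] sinh := by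
    simpa using mul_cosh_mul_isLittleO_sinh_atTop (q := 0) (by simp)
  have rhs_isLittleO : (fun x ↦ a * (x * cosh (q * x)) + b * x) =o[atTop] sinh :=
    ((mul_cosh_mul_isLittleO_sinh_atTop hq).const_mul_left a).add (id_isLittleO.const_mul_left b)
  filter_upwards [rhs_isLittleO.bound one_half_pos, eventually_gt_atTop 0] with x hbound hx
  have sinh_pos : 0 < sinh x := sinh_pos_iff.mpr hx
  rw [lt_div_iff₀ hx]
  calc (a * cosh (q * x) + b) * x = a * (x * cosh (q * x)) + b * x := by ring
    _ ≤ 1 / 2 * ‖sinh x‖ := (le_norm_self _).trans hbound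
    _ = sinh x / 2 := by rw [norm_of_nonneg sinh_pos.le]; ring
    _ < sinh x := half_lt_self sinh_pos

/-- For `q ≥ 1` and `x > 0`, `sinh x / x < (1/(3q²))·cosh(qx) + 1 − 1/(3q²)`;
moreover `1` is the smallest such constant. -/
theorem stmt_10 :
    (∀ q : ℝ, 1 ≤ q → ∀ x : ℝ, 0 < x →
      Real.sinh x / x < 1 / (3 * q ^ 2) * Real.cosh (q * x) + 1 - 1 / (3 * q ^ 2)) ∧
    (∀ q : ℝ, 0 < q →
      (∀ x : ℝ, 0 < x →
        Real.sinh x / x < 1 / (3 * q ^ 2) * Real.cosh (q * x) + 1 - 1 / (3 * q ^ 2)) →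
      1 ≤ q) := by
  constructor
  · intro q hq x hx
    calc sinh x / x < (cosh (q * x) - 1) / (3 * q ^ 2) + 1 :=
          sub_lt_iff_lt_add.mp (sinh_div_self_sub_one_lt (hq.trans (le_abs_self q)) hx.ne')
      _ = 1 / (3 * q ^ 2) * cosh (q * x) + 1 - 1 / (3 * q ^ 2) := by ring
  · intro q hq h
    by_contra! hq1
    have reversed := eventually_mul_cosh_add_lt_sinh_div_self ((abs_of_pos hq).trans_lt hq1)
      (1 / (3 * q ^ 2)) (1 - 1 / (3 * q ^ 2))
    obtain ⟨x, hreversed, hx⟩ := (reversed.and (eventually_gt_atTop 0)).exists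
    exact (h x hx).not_gt (by rwa [add_sub_assoc])
end
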